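/- Let p > 0, 0 < δ < p, λ > 0, μ > 0, q > 0, and let W^{(q)}, 𝕎^{(q)} be the explicit q-scale functions of the Cramér–Lundberg model. Then for all x ≥ 0 and z > 0: W^{(q)}(x+z) + δ∫₀ˣ 𝕎^{(q)}(x−y) W^{(q)′}(y+z) dy = (p−δ) 𝕎^{(q)}(x) W^{(q)}(z) − (1/(μλ)) [ (q+λ)W^{(q)}(z) − p W^{(q)′}(z) ] · [ (q+λ)𝕎^{(q)}(x) − (p−δ)𝕎^{(q)′}(x) ]. -/

import Mathlib

open MeasureTheory

/- Cramér–Lundberg model with explicit q-scale functions W^{(q)} (for X) and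
   𝕎^{(q)} (for Y = X − δ·).  The left-hand side below is the refracted
   scale function w^{(q)}(x;−z). -/

noncomputable def qp (p lam μ q : ℝ) : ℝ :=
  (q + lam - μ * p + Real.sqrt ((q + lam - μ * p) ^ 2 + 4 * p * q * μ)) / (2 * p)

noncomputable def qm (p lam μ q : ℝ) : ℝ :=
  (q + lam - μ * p - Real.sqrt ((q + lam - μ * p) ^ 2 + 4 * p * q * μ)) / (2 * p)

noncomputable def Ap (p lam μ q : ℝ) : ℝ := (μ + qp p lam μ q) / (qp p lam μ q - qm p lam μ q)

noncomputable def Am (p lam μ q : ℝ) : ℝ := (μ + qm p lam μ q) / (qp p lam μ q - qm p lam μ q)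

/-- The q-scale function W^{(q)} of X (its formula on [0,∞)). -/
noncomputable def Wq (p lam μ q x : ℝ) : ℝ :=
  1 / p * (Ap p lam μ q * Real.exp (qp p lam μ q * x) -
    Am p lam μ q * Real.exp (qm p lam μ q * x))

/-- The q-scale function 𝕎^{(q)} of Y (its formula on [0,∞)). -/
noncomputable def WWq (p δ lam μ q x : ℝ) : ℝ := Wq (p - δ) lam μ q x

/-!
Put `B = (q + λ) f - p f'`. For exponential claims, the integral equation
`(q + λ) f - p f' = λ ∫ f (· - u) μ e^{-μ u} du` of a `q`-harmonic function becomes the first-order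
system `p f' = (q + λ) f - B`, `B' = μ (λ f - B)`. If `(f, B)` solves this system for the premium
rate `p` and `(g, C)` solves it for `r`, then all terms cancel in
`d/dy [r g(x - y) f(y + z) - B(y + z) C(x - y) / (μ λ)]` except `(r - p) g(x - y) f'(y + z)`.
Integrating over `[0, x]`, with `r g(0) = 1` and `C(0) = 0` for a scale function `g`, gives the
identity.
-/

/-- The term `B = (q + λ) f - p f'`, so named because it equals the claim integral
`λ ∫₀ˣ f (x - u) μ e^{-μ u} du` when `f` is the `q`-scale function. -/
noncomputable def claimTerm (p lam q : ℝ) (f : ℝ → ℝ) (x : ℝ) : ℝ :=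
  (q + lam) * f x - p * deriv f x

/-- `f` is `q`-harmonic for the generator of the Cramér–Lundberg process with premium rate `p`,
claim arrival rate `lam` and `Exp(μ)` claims. The integral equation
`B = λ ∫ f (· - u) μ e^{-μ u} du` for `B = claimTerm p lam q f` is encoded in its differentiated
form `B' = μ (λ f - B)`, which leaves the value of `B` at `0` free. -/
structure IsQHarmonic (p lam μ q : ℝ) (f : ℝ → ℝ) : Prop where
  differentiable : Differentiable ℝ f
  hasDerivAt_claimTerm (x : ℝ) :
    HasDerivAt (claimTerm p lam q f) (μ * (lam * f x - claimTerm p lam q f x)) x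

/-- The bilinear expression in a `q`-harmonic `f` for the premium rate `p` and a `q`-harmonic `g`
for the premium rate `r` whose value at the scale functions is the refracted scale function. -/
noncomputable def refractionForm (p r lam μ q : ℝ) (f g : ℝ → ℝ) (z x : ℝ) : ℝ :=
  r * g x * f z - 1 / (μ * lam) * claimTerm p lam q f z * claimTerm r lam q g x

/-- The discriminant of `p t² - (q + λ - μ p) t - q μ`, whose roots are `qp` and `qm`. -/
def scaleDiscrim (p lam μ q : ℝ) : ℝ :=
  (q + lam - μ * p) ^ 2 + 4 * p * q * μ

section ClaimTerm

variable {p lam q : ℝ} {f g : ℝ → ℝ}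

lemma claimTerm_const_mul (c : ℝ) :
    claimTerm p lam q (fun x => c * f x) = fun x => c * claimTerm p lam q f x := by
  ext x
  simp only [claimTerm, deriv_const_mul_field]
  ring

lemma claimTerm_sub (hf : Differentiable ℝ f) (hg : Differentiable ℝ g) :
    claimTerm p lam q (fun x => f x - g x) =
      fun x => claimTerm p lam q f x - claimTerm p lam q g x := by
  ext x
  simp only [claimTerm, deriv_fun_sub (hf x) (hg x)]
  ring

lemma hasDerivAt_exp_mul (t x : ℝ) :
    HasDerivAt (fun x => Real.exp (t * x)) (Real.exp (t * x) * t) x :=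
  (hasDerivAt_const_mul t).exp

lemma claimTerm_exp_mul (t : ℝ) :
    claimTerm p lam q (fun x => Real.exp (t * x)) =
      fun x => (q + lam - p * t) * Real.exp (t * x) := by
  ext x
  rw [claimTerm, (hasDerivAt_exp_mul t x).deriv]
  ring

end ClaimTerm

namespace IsQHarmonic

variable {p r lam μ q : ℝ} {f g : ℝ → ℝ}

lemma const_mul (hf : IsQHarmonic p lam μ q f) (c : ℝ) :
    IsQHarmonic p lam μ q fun x => c * f x where
  differentiable := hf.differentiable.const_mul c
  hasDerivAt_claimTerm x := by
    rw [claimTerm_const_mul]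
    exact ((hf.hasDerivAt_claimTerm x).const_mul c).congr_deriv (by ring)

lemma sub (hf : IsQHarmonic p lam μ q f) (hg : IsQHarmonic p lam μ q g) :
    IsQHarmonic p lam μ q fun x => f x - g x where
  differentiable := hf.differentiable.sub hg.differentiable
  hasDerivAt_claimTerm x := by
    rw [claimTerm_sub hf.differentiable hg.differentiable]
    exact ((hf.hasDerivAt_claimTerm x).sub (hg.hasDerivAt_claimTerm x)).congr_deriv (by ring)

lemma exp_mul {t : ℝ} (ht : p * t ^ 2 = (q + lam - μ * p) * t + q * μ) :
    IsQHarmonic p lam μ q fun x => Real.exp (t * x) where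
  differentiable x := (hasDerivAt_exp_mul t x).differentiableAt
  hasDerivAt_claimTerm x := by
    rw [claimTerm_exp_mul]
    refine ((hasDerivAt_exp_mul t x).const_mul (q + lam - p * t)).congr_deriv ?_
    linear_combination -Real.exp (t * x) * ht

lemma continuous_deriv (hf : IsQHarmonic p lam μ q f) (hp : p ≠ 0) : Continuous (deriv f) := by
  have hB : Continuous (claimTerm p lam q f) :=
    continuous_iff_continuousAt.2 fun x => (hf.hasDerivAt_claimTerm x).continuousAt
  have hf' : deriv f = fun x => ((q + lam) * f x - claimTerm p lam q f x) / p := by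
    ext x
    rw [claimTerm, sub_sub_cancel, mul_div_cancel_left₀ _ hp]
  rw [hf']
  exact ((hf.differentiable.continuous.const_mul _).sub hB).div_const p

lemma hasDerivAt_refractionForm (hf : IsQHarmonic p lam μ q f) (hg : IsQHarmonic r lam μ q g)
    (hlam : lam ≠ 0) (hμ : μ ≠ 0) (x z y : ℝ) :
    HasDerivAt (fun y => refractionForm p r lam μ q f g (y + z) (x - y))
      ((r - p) * (g (x - y) * deriv f (y + z))) y := by
  have hf' := (hf.differentiable (y + z)).hasDerivAt.comp_add_const y z
  have hg' := (hg.differentiable (x - y)).hasDerivAt.comp_const_sub x y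
  have hB := (hf.hasDerivAt_claimTerm (y + z)).comp_add_const y z
  have hC := (hg.hasDerivAt_claimTerm (x - y)).comp_const_sub x y
  refine (((hg'.const_mul r).mul hf').sub
    ((hB.const_mul (1 / (μ * lam))).mul hC)).congr_deriv ?_
  unfold claimTerm
  field_simp
  ring

lemma integral_mul_deriv_eq_sub_refractionForm (hf : IsQHarmonic p lam μ q f)
    (hg : IsQHarmonic r lam μ q g) (hp : p ≠ 0) (hlam : lam ≠ 0) (hμ : μ ≠ 0) (x z : ℝ) :
    (r - p) * ∫ y in (0 : ℝ)..x, g (x - y) * deriv f (y + z) =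
      refractionForm p r lam μ q f g (x + z) 0 - refractionForm p r lam μ q f g z x := by
  have hf' : Continuous (deriv f) := hf.continuous_deriv hp
  have hg' : Continuous g := hg.differentiable.continuous
  have hint : Continuous fun y => (r - p) * (g (x - y) * deriv f (y + z)) := by fun_prop
  rw [← intervalIntegral.integral_const_mul, intervalIntegral.integral_eq_sub_of_hasDerivAt
    (fun y _ => hf.hasDerivAt_refractionForm hg hlam hμ x z y) (hint.intervalIntegrable 0 x)]
  simp only [sub_self, sub_zero, zero_add]

end IsQHarmonic

section ScaleFunction

variable {p r lam μ q : ℝ}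

lemma scaleDiscrim_pos (hp : 0 < p) (hμ : 0 < μ) (hq : 0 < q) :
    0 < scaleDiscrim p lam μ q := by
  unfold scaleDiscrim
  positivity

lemma mul_sq_eq_iff_eq_qp_or_eq_qm (hp : p ≠ 0) (hD : 0 ≤ scaleDiscrim p lam μ q) {t : ℝ} :
    p * t ^ 2 = (q + lam - μ * p) * t + q * μ ↔ t = qp p lam μ q ∨ t = qm p lam μ q := by
  have hdiscrim : discrim p (-(q + lam - μ * p)) (-(q * μ)) =
      √(scaleDiscrim p lam μ q) * √(scaleDiscrim p lam μ q) := by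
    rw [Real.mul_self_sqrt hD, discrim, scaleDiscrim]
    ring
  have hroots := quadratic_eq_zero_iff hp hdiscrim t
  rw [neg_neg] at hroots
  refine Iff.trans ⟨fun h => ?_, fun h => ?_⟩ hroots <;> linear_combination h

lemma mul_qp_add_qm (hp : p ≠ 0) :
    p * (qp p lam μ q + qm p lam μ q) = q + lam - μ * p := by
  unfold qp qm
  field_simp
  ring

lemma qp_sub_qm_ne_zero (hp : p ≠ 0) (hD : 0 < scaleDiscrim p lam μ q) :
    qp p lam μ q - qm p lam μ q ≠ 0 := by
  have hsub : qp p lam μ q - qm p lam μ q = √(scaleDiscrim p lam μ q) / p := by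
    unfold qp qm scaleDiscrim
    field_simp
    ring
  rw [hsub]
  exact div_ne_zero (Real.sqrt_pos.2 hD).ne' hp

lemma isQHarmonic_Wq (hp : p ≠ 0) (hD : 0 ≤ scaleDiscrim p lam μ q) :
    IsQHarmonic p lam μ q (Wq p lam μ q) := by
  have hqp := (mul_sq_eq_iff_eq_qp_or_eq_qm hp hD).2 (.inl rfl)
  have hqm := (mul_sq_eq_iff_eq_qp_or_eq_qm hp hD).2 (.inr rfl)
  exact (((IsQHarmonic.exp_mul hqp).const_mul _).sub
    ((IsQHarmonic.exp_mul hqm).const_mul _)).const_mul (1 / p)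

lemma Wq_zero (hp : p ≠ 0) (hD : 0 < scaleDiscrim p lam μ q) : Wq p lam μ q 0 = 1 / p := by
  have hd := qp_sub_qm_ne_zero hp hD
  simp only [Wq, Ap, Am, mul_zero, Real.exp_zero, mul_one]
  field_simp
  ring

lemma claimTerm_Wq (x : ℝ) :
    claimTerm p lam q (Wq p lam μ q) x =
      1 / p * (Ap p lam μ q * ((q + lam - p * qp p lam μ q) * Real.exp (qp p lam μ q * x)) -
        Am p lam μ q * ((q + lam - p * qm p lam μ q) * Real.exp (qm p lam μ q * x))) := by
  have hexp (c t : ℝ) : Differentiable ℝ fun x => c * Real.exp (t * x) :=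
    fun x => ((hasDerivAt_exp_mul t x).const_mul c).differentiableAt
  unfold Wq
  simp only [claimTerm_const_mul, claimTerm_sub (hexp _ _) (hexp _ _), claimTerm_exp_mul]

lemma claimTerm_Wq_zero (hp : p ≠ 0) (hD : 0 < scaleDiscrim p lam μ q) :
    claimTerm p lam q (Wq p lam μ q) 0 = 0 := by
  have hd := qp_sub_qm_ne_zero hp hD
  have hs := mul_qp_add_qm (lam := lam) (μ := μ) (q := q) hp
  rw [claimTerm_Wq]
  simp only [Ap, Am, mul_zero, Real.exp_zero, mul_one]
  field_simp
  linear_combination -(qp p lam μ q - qm p lam μ q) * hs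

lemma refractionForm_Wq_zero (hr : r ≠ 0) (hD : 0 < scaleDiscrim r lam μ q) (f : ℝ → ℝ) (z : ℝ) :
    refractionForm p r lam μ q f (Wq r lam μ q) z 0 = f z := by
  rw [refractionForm, Wq_zero hr hD, claimTerm_Wq_zero hr hD, mul_one_div_cancel hr, one_mul,
    mul_zero, sub_zero]

lemma IsQHarmonic.add_integral_Wq_mul_deriv {f : ℝ → ℝ} (hf : IsQHarmonic p lam μ q f)
    (hp : p ≠ 0) (hr : r ≠ 0) (hlam : lam ≠ 0) (hμ : μ ≠ 0) (hD : 0 < scaleDiscrim r lam μ q)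
    (x z : ℝ) :
    f (x + z) + (p - r) * ∫ y in (0 : ℝ)..x, Wq r lam μ q (x - y) * deriv f (y + z) =
      refractionForm p r lam μ q f (Wq r lam μ q) z x := by
  have h := hf.integral_mul_deriv_eq_sub_refractionForm (isQHarmonic_Wq hr hD.le) hp hlam hμ x z
  rw [refractionForm_Wq_zero hr hD] at h
  linear_combination -h

end ScaleFunction

theorem refracted_scale_function_CL_general (p δ lam μ q : ℝ)
    (hp : p ≠ 0) (hδ : δ ≠ p) (hlam : lam ≠ 0) (hμ : μ ≠ 0)
    (hD : 0 < scaleDiscrim p lam μ q) (hDδ : 0 < scaleDiscrim (p - δ) lam μ q) (x z : ℝ) :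
    Wq p lam μ q (x + z) +
        δ * ∫ y in (0 : ℝ)..x, WWq p δ lam μ q (x - y) * deriv (Wq p lam μ q) (y + z)
      = (p - δ) * WWq p δ lam μ q x * Wq p lam μ q z -
        1 / (μ * lam) *
          ((q + lam) * Wq p lam μ q z - p * deriv (Wq p lam μ q) z) *
          ((q + lam) * WWq p δ lam μ q x - (p - δ) * deriv (WWq p δ lam μ q) x) := by
  have h := (isQHarmonic_Wq hp hD.le).add_integral_Wq_mul_deriv hp (sub_ne_zero.2 hδ.symm)
    hlam hμ hDδ x z
  rwa [sub_sub_cancel] at h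

theorem refracted_scale_function_CL (p δ lam μ q : ℝ)
    (hp : 0 < p) (hδ : 0 < δ) (hδp : δ < p) (hlam : 0 < lam) (hμ : 0 < μ) (hq : 0 < q)
    (x z : ℝ) (hx : 0 ≤ x) (hz : 0 < z) :
    Wq p lam μ q (x + z) +
        δ * ∫ y in (0 : ℝ)..x, WWq p δ lam μ q (x - y) * deriv (Wq p lam μ q) (y + z)
      = (p - δ) * WWq p δ lam μ q x * Wq p lam μ q z -
        1 / (μ * lam) *
          ((q + lam) * Wq p lam μ q z - p * deriv (Wq p lam μ q) z) *
          ((q + lam) * WWq p δ lam μ q x - (p - δ) * deriv (WWq p δ lam μ q) x) :=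
  refracted_scale_function_CL_general p δ lam μ q hp.ne' hδp.ne hlam.ne' hμ.ne'
    (scaleDiscrim_pos hp hμ hq) (scaleDiscrim_pos (sub_pos.2 hδp) hμ hq) x z
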